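/- The ideal I_5 = ker φ_5 is not generated by the set G_5; more precisely, the binomial q = q_{10101} q_{01010} − q_{11111} q_{00000} belongs to I_5 but not to the ideal generated by G_5, so the ideal generated by G_5 is strictly contained in I_5. -/

import Mathlib

open MvPolynomial

/-- The homomorphism `φ_m` sending `q_{i_1⋯i_m}` to
`a_{i_1}^{(1)} ⋯ a_{i_m}^{(m)} a_{i_1+⋯+i_m mod 2}^{(m+1)}`.
Here `(0,1)`-vectors are modeled as `Fin m → Bool`, and the variable `a_i^{(j)}` is
indexed by the pair `(j, i) : Fin (m+1) × Bool`. -/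
noncomputable def phiCut (K : Type*) [CommRing K] (m : ℕ) :
    MvPolynomial (Fin m → Bool) K →ₐ[K] MvPolynomial (Fin (m + 1) × Bool) K :=
  aeval fun v =>
    (∏ j : Fin m, (X (Fin.castSucc j, v j) : MvPolynomial (Fin (m + 1) × Bool) K)) *
      X (Fin.last m, decide ((∑ j : Fin m, if v j then 1 else 0) % 2 = 1))

/-- The set `G_{m+1}` of quadratic binomials
`q_{i_1⋯i_{m+1}} q_{j_1⋯j_{m+1}} - q_{k_1⋯k_{m+1}} q_{l_1⋯l_{m+1}} ∈ I_{m+1}` such that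
either (1) for some position `a` all four subscripts agree at `a` and the binomial
obtained by deleting the `a`-th index lies in `I_m`, or (2) at every position `b` the
subscripts satisfy `i_b + j_b = 1 = k_b + l_b` and the binomial obtained by deleting the
`b`-th index lies in `I_m`. -/
def Gset (K : Type*) [Field K] (m : ℕ) : Set (MvPolynomial (Fin (m + 1) → Bool) K) :=
  {f | ∃ I J L M : Fin (m + 1) → Bool,
    f = X I * X J - X L * X M ∧
    f ∈ RingHom.ker (phiCut K (m + 1)).toRingHom ∧
    ((∃ a : Fin (m + 1), I a = J a ∧ J a = L a ∧ L a = M a ∧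
        (X (a.removeNth I) * X (a.removeNth J) - X (a.removeNth L) * X (a.removeNth M) :
          MvPolynomial (Fin m → Bool) K) ∈ RingHom.ker (phiCut K m).toRingHom) ∨
      (∀ b : Fin (m + 1), I b ≠ J b ∧ L b ≠ M b ∧
        (X (b.removeNth I) * X (b.removeNth J) - X (b.removeNth L) * X (b.removeNth M) :
          MvPolynomial (Fin m → Bool) K) ∈ RingHom.ker (phiCut K m).toRingHom))}

/-!
A binomial `q_I q_J - q_L q_M` lies in `I_m` exactly when `{I_j, J_j} = {L_j, M_j}` at every
position `j` and the parities of the subscripts satisfy the same equation. For `m` odd,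
complementary vectors have opposite parities, so `q_u q_{uᶜ} - q_v q_{vᶜ} ∈ I_m` for all `u`, `v`.

Still for `m` odd, evaluating `q_u` and `q_{uᶜ}` at `1` and all other variables at `0` kills `G_m`.
In a binomial of type (1), a monomial which survives has both subscripts in `{u, uᶜ}` and agreeing
somewhere, so it is a square, and then the two monomials coincide. In a binomial of type (2),
deleting a position leaves complementary vectors of even length, which have equal parities. Hence
corresponding deletions of `I` and `L` have the same parity, so `I_b + L_b` does not depend on `b`;
that is, `L ∈ {I, Iᶜ}`, and the binomial is zero. The same evaluation takes
`q_u q_{uᶜ} - q_v q_{vᶜ}` to `1` as soon as `v ∉ {u, uᶜ}`.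
-/

section ProductsOfIndexedVariables

variable {ι α R : Type*} [Fintype ι] [CommSemiring R]

theorem prod_X_prodMk_eq_monomial (f : ι → α) :
    (∏ i, X (i, f i) : MvPolynomial (ι × α) R) =
      monomial (∑ i, Finsupp.single (i, f i) 1) 1 := by
  simp only [X, monomial_sum_one]

theorem sum_single_prodMk_apply [DecidableEq α] (f : ι → α) (i : ι) (a : α) :
    (∑ k, Finsupp.single (k, f k) (1 : ℕ)) (i, a) = if f i = a then 1 else 0 := by
  classical
  simp [Finsupp.finsetSum_apply, Finsupp.single_apply, Prod.mk.injEq, ite_and]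

theorem prod_X_mul_prod_X_eq_iff [Nontrivial R] {f g h k : ι → α} :
    ((∏ i, X (i, f i)) * ∏ i, X (i, g i) : MvPolynomial (ι × α) R) =
        (∏ i, X (i, h i)) * ∏ i, X (i, k i) ↔
      ∀ i, s(f i, g i) = s(h i, k i) := by
  classical
  constructor
  · intro heq i
    simp only [prod_X_prodMk_eq_monomial, monomial_mul, mul_one] at heq
    have hcount : ∀ a, (if f i = a then 1 else 0) + (if g i = a then 1 else 0) =
        (if h i = a then 1 else 0) + if k i = a then 1 else 0 := fun a => by
      simpa only [Finsupp.add_apply, sum_single_prodMk_apply] using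
        DFunLike.congr_fun (monomial_left_injective one_ne_zero heq) (i, a)
    rw [Sym2.eq_iff]
    grind only [hcount (f i), hcount (g i)]
  · intro heq
    simp only [← Finset.prod_mul_distrib]
    refine Finset.prod_congr rfl fun i _ => ?_
    obtain ⟨hfh, hgk⟩ | ⟨hfk, hgh⟩ := Sym2.eq_iff.1 (heq i)
    · rw [hfh, hgk]
    · rw [hfk, hgh, mul_comm]

end ProductsOfIndexedVariables

section ParityBit

/-- The sum modulo 2 of the entries of a `(0,1)`-vector. It is the last index occurring in
`phiCut`, encoded as a `Bool` by the same expression. -/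
def parityBit {m : ℕ} (v : Fin m → Bool) : Bool :=
  decide ((∑ j : Fin m, if v j then 1 else 0) % 2 = 1)

theorem parityBit_eq_xor_removeNth {m : ℕ} (v : Fin (m + 1) → Bool) (b : Fin (m + 1)) :
    parityBit v = (v b ^^ parityBit (b.removeNth v)) := by
  simp only [parityBit, Fin.sum_univ_succAbove _ b, Fin.removeNth]
  cases v b <;> grind

theorem parityBit_compl {m : ℕ} (v : Fin m → Bool) :
    parityBit vᶜ = (decide (Odd m) ^^ parityBit v) := by
  have hsum : (∑ j, if vᶜ j then 1 else 0) + (∑ j, if v j then 1 else 0) = m := by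
    rw [← Finset.sum_add_distrib]
    calc ∑ j, ((if vᶜ j then 1 else 0) + if v j then 1 else 0)
        = ∑ _j : Fin m, 1 := Finset.sum_congr rfl fun j _ => by cases hj : v j <;> simp [hj]
      _ = m := by simp
  simp only [parityBit, Nat.odd_iff]
  grind

theorem eq_or_eq_compl_of_parityBit_removeNth_eq {m : ℕ} {v w : Fin (m + 1) → Bool}
    (h : ∀ b : Fin (m + 1), parityBit (b.removeNth w) = parityBit (b.removeNth v)) :
    w = v ∨ w = vᶜ := by
  have hxor : ∀ b, (w b ^^ parityBit w) = (v b ^^ parityBit v) := fun b => by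
    simpa [parityBit_eq_xor_removeNth _ b] using h b
  by_cases hpar : parityBit w = parityBit v
  · left
    funext b
    simpa [hpar] using hxor b
  · right
    funext b
    have hb := hxor b
    rw [Bool.eq_not.2 hpar] at hb
    simpa [Bool.eq_not] using hb

end ParityBit

section Kernel

variable {K : Type*} [CommRing K] {m : ℕ} {I J L M : Fin m → Bool}

theorem phiCut_X (v : Fin m → Bool) :
    phiCut K m (X v) = ∏ j, X (j, (Fin.snoc v (parityBit v) : Fin (m + 1) → Bool) j) := by
  simp [phiCut, parityBit, Fin.prod_univ_castSucc]

theorem binomial_mem_ker_phiCut_iff [Nontrivial K] :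
    (X I * X J - X L * X M : MvPolynomial (Fin m → Bool) K) ∈
        RingHom.ker (phiCut K m).toRingHom ↔
      (∀ j, s(I j, J j) = s(L j, M j)) ∧
        s(parityBit I, parityBit J) = s(parityBit L, parityBit M) := by
  have hker : (X I * X J - X L * X M : MvPolynomial (Fin m → Bool) K) ∈
        RingHom.ker (phiCut K m).toRingHom ↔
      phiCut K m (X I) * phiCut K m (X J) = phiCut K m (X L) * phiCut K m (X M) := by
    simp [RingHom.mem_ker, sub_eq_zero]
  simp only [hker, phiCut_X, prod_X_mul_prod_X_eq_iff, Fin.forall_fin_succ', Fin.snoc_castSucc,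
    Fin.snoc_last]

theorem compl_binomial_mem_ker_phiCut [Nontrivial K] (hm : Odd m) (u v : Fin m → Bool) :
    (X u * X uᶜ - X v * X vᶜ : MvPolynomial (Fin m → Bool) K) ∈
      RingHom.ker (phiCut K m).toRingHom := by
  have pair_not : ∀ a b : Bool, s(a, !a) = s(b, !b) := by decide
  rw [binomial_mem_ker_phiCut_iff]
  exact ⟨fun j => pair_not (u j) (v j), by
    simpa [parityBit_compl, hm] using pair_not (parityBit u) (parityBit v)⟩

theorem parityBit_eq_of_compl_binomial_mem_ker [Nontrivial K] (hm : Even m)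
    {u v : Fin m → Bool}
    (h : (X u * X uᶜ - X v * X vᶜ : MvPolynomial (Fin m → Bool) K) ∈
      RingHom.ker (phiCut K m).toRingHom) :
    parityBit v = parityBit u := by
  have hpar := (binomial_mem_ker_phiCut_iff.1 h).2
  simp only [parityBit_compl, Nat.not_odd_iff_even.2 hm, decide_false, Bool.false_xor] at hpar
  exact (Sym2.diag_injective hpar).symm

theorem binomial_eq_zero_of_forall_removeNth_mem_ker [Nontrivial K] (hm : Even m)
    {I J L M : Fin (m + 1) → Bool}
    (h : ∀ b : Fin (m + 1), I b ≠ J b ∧ L b ≠ M b ∧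
      (X (b.removeNth I) * X (b.removeNth J) - X (b.removeNth L) * X (b.removeNth M) :
        MvPolynomial (Fin m → Bool) K) ∈ RingHom.ker (phiCut K m).toRingHom) :
    (X I * X J - X L * X M : MvPolynomial (Fin (m + 1) → Bool) K) = 0 := by
  obtain rfl : J = Iᶜ := funext fun b => Bool.eq_not.2 (h b).1.symm
  obtain rfl : M = Lᶜ := funext fun b => Bool.eq_not.2 (h b).2.1.symm
  have hpar : ∀ b : Fin (m + 1), parityBit (b.removeNth L) = parityBit (b.removeNth I) :=
    fun b => parityBit_eq_of_compl_binomial_mem_ker hm (h b).2.2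
  obtain rfl | rfl := eq_or_eq_compl_of_parityBit_removeNth_eq hpar
  · exact sub_self _
  · rw [compl_compl, mul_comm, sub_self]

theorem span_Gset_le_ker_phiCut (K : Type*) [Field K] (m : ℕ) :
    Ideal.span (Gset K m) ≤ RingHom.ker (phiCut K (m + 1)).toRingHom :=
  Ideal.span_le.2 fun _ ⟨_, _, _, _, _, hker, _⟩ => hker

end Kernel

section ComplementaryPair

variable {ι : Type*} {u : ι → Bool} {a : ι}

/-- The two-element set `{u, uᶜ}` of a `(0,1)`-vector and its complement; its indicator function is
the point at which elements of `Gset` are evaluated. -/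
def complPair (u : ι → Bool) : Set (ι → Bool) :=
  {u, uᶜ}

theorem self_mem_complPair (u : ι → Bool) : u ∈ complPair u :=
  Or.inl rfl

theorem compl_mem_complPair (u : ι → Bool) : uᶜ ∈ complPair u :=
  Or.inr rfl

theorem eq_of_mem_complPair_of_apply_eq {v w : ι → Bool} (hv : v ∈ complPair u)
    (hw : w ∈ complPair u) (ha : v a = w a) :
    v = w := by
  obtain rfl | rfl := hv <;> obtain rfl | rfl := hw <;> simp at ha ⊢

theorem mem_complPair_of_pairs_eq {I J L M : ι → Bool}
    (hpairs : ∀ j, s(I j, J j) = s(L j, M j)) (ha : I a = J a)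
    (hI : I ∈ complPair u) (hJ : J ∈ complPair u) :
    L ∈ complPair u ∧ M ∈ complPair u := by
  obtain rfl := eq_of_mem_complPair_of_apply_eq hI hJ ha
  have hLM : ∀ j, L j = I j ∧ M j = I j := fun j => by
    have hj := Sym2.eq_iff.1 (hpairs j)
    grind
  obtain rfl : L = I := funext fun j => (hLM j).1
  obtain rfl : M = L := funext fun j => (hLM j).2
  exact ⟨hI, hI⟩

end ComplementaryPair

section Evaluation

theorem eval_indicator_X_mul_X {σ R : Type*} [CommSemiring R] (s : Set σ) (i j : σ)
    [Decidable (i ∈ s ∧ j ∈ s)] :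
    eval (s.indicator 1) (X i * X j : MvPolynomial σ R) = if i ∈ s ∧ j ∈ s then 1 else 0 := by
  by_cases hi : i ∈ s <;> by_cases hj : j ∈ s <;> simp [hi, hj]

variable {K : Type*} [Field K] {m : ℕ}

theorem eval_indicator_complPair_eq_zero_of_mem_Gset (hm : Even m) (u : Fin (m + 1) → Bool)
    {f : MvPolynomial (Fin (m + 1) → Bool) K} (hf : f ∈ Gset K m) :
    eval ((complPair u).indicator 1) f = 0 := by
  classical
  obtain ⟨I, J, L, M, rfl, hker, ⟨a, hIJ, -, hLM, -⟩ | hdel⟩ := hf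
  · have hpairs := (binomial_mem_ker_phiCut_iff.1 hker).1
    have hiff : I ∈ complPair u ∧ J ∈ complPair u ↔ L ∈ complPair u ∧ M ∈ complPair u :=
      ⟨fun h => mem_complPair_of_pairs_eq hpairs hIJ h.1 h.2,
        fun h => mem_complPair_of_pairs_eq (fun j => (hpairs j).symm) hLM h.1 h.2⟩
    simp only [map_sub, eval_indicator_X_mul_X, hiff, sub_self]
  · rw [binomial_eq_zero_of_forall_removeNth_mem_ker hm hdel, map_zero]

theorem compl_binomial_notMem_span_Gset (hm : Even m) {u v : Fin (m + 1) → Bool}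
    (hv : v ∉ complPair u) :
    (X u * X uᶜ - X v * X vᶜ : MvPolynomial (Fin (m + 1) → Bool) K) ∉
      Ideal.span (Gset K m) := by
  classical
  intro hmem
  have hle : Ideal.span (Gset K m) ≤
      RingHom.ker (eval ((complPair u).indicator (1 : (Fin (m + 1) → Bool) → K))) :=
    Ideal.span_le.2 fun _ hf => eval_indicator_complPair_eq_zero_of_mem_Gset hm u hf
  have hzero := RingHom.mem_ker.1 (hle hmem)
  simp [eval_indicator_X_mul_X, self_mem_complPair, compl_mem_complPair, hv, -map_mul] at hzero

end Evaluation

theorem I5_not_generated_by_G5_general (K : Type*) [Field K] {m : ℕ} (hm : Even m)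
    {u v : Fin (m + 1) → Bool} (hvu : v ≠ u) (hvu' : v ≠ uᶜ) :
    (X u * X uᶜ - X v * X vᶜ : MvPolynomial (Fin (m + 1) → Bool) K) ∈
        RingHom.ker (phiCut K (m + 1)).toRingHom ∧
      (X u * X uᶜ - X v * X vᶜ : MvPolynomial (Fin (m + 1) → Bool) K) ∉
        Ideal.span (Gset K m) ∧
      Ideal.span (Gset K m) < RingHom.ker (phiCut K (m + 1)).toRingHom := by
  have hmem := compl_binomial_mem_ker_phiCut (K := K) hm.add_one u v
  have hnotMem := compl_binomial_notMem_span_Gset (K := K) hm (not_or_intro hvu hvu')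
  exact ⟨hmem, hnotMem, SetLike.lt_iff_le_and_exists.2
    ⟨span_Gset_le_ker_phiCut K m, _, hmem, hnotMem⟩⟩

/-- The ideal `I_5 = ker φ_5` is not generated by `G_5`: the binomial
`q = q_{10101} q_{01010} - q_{11111} q_{00000}` lies in `I_5` but not in the ideal
generated by `G_5`, so the ideal generated by `G_5` is strictly contained in `I_5`. -/
theorem I5_not_generated_by_G5 (K : Type*) [Field K] :
    ((X ![true, false, true, false, true] * X ![false, true, false, true, false] -
        X ![true, true, true, true, true] * X ![false, false, false, false, false] :
        MvPolynomial (Fin 5 → Bool) K) ∈ RingHom.ker (phiCut K 5).toRingHom) ∧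
    ((X ![true, false, true, false, true] * X ![false, true, false, true, false] -
        X ![true, true, true, true, true] * X ![false, false, false, false, false] :
        MvPolynomial (Fin 5 → Bool) K) ∉ Ideal.span (Gset K 4)) ∧
    Ideal.span (Gset K 4) < RingHom.ker (phiCut K 5).toRingHom := by
  have hu : ![false, true, false, true, false] = ![true, false, true, false, true]ᶜ := by decide
  have hv : ![false, false, false, false, false] = ![true, true, true, true, true]ᶜ := by decide
  rw [hu, hv]
  exact I5_not_generated_by_G5_general K (by decide) (by decide) (by decide)
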